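/- arXiv:2311.17610 — 2 statements merged into one kernel-verified Lean document; each statement's English description precedes it below -/
import Mathlib

section
/- Let (V, ω) be a symplectic vector space and let J₀ and J be two ω-compatible complex structures on V, with associated metric g₀(x, y) := ω(x, J₀ y). Set S := −J₀ ∘ J. Then: (1) S is g₀-symmetric, i.e., g₀(Sx, y) = g₀(x, Sy) for all x, y; (2) S is g₀-positive-definite, i.e., g₀(Sx, x) > 0 for all x ≠ 0; (3) S is symplectic, i.e., ω(Sx, Sy) = ω(x, y) for all x, y; (4) S ∘ J₀ ∘ S = J₀; and (5) J = J₀ ∘ S. -/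
/-- Let `(V, ω)` be a symplectic vector space and `J₀`, `J` two `ω`-compatible complex
structures, with associated metric `g₀(x,y) := ω(x, J₀ y)`. Set `S := -J₀ ∘ J`. Then
`S` is `g₀`-symmetric, `g₀`-positive-definite, symplectic (`ω(Sx,Sy) = ω(x,y)`),
satisfies `S ∘ J₀ ∘ S = J₀`, and `J = J₀ ∘ S`. -/
theorem neg_J0_comp_J_properties
    (V : Type*) [AddCommGroup V] [Module ℝ V]
    (ω : V →ₗ[ℝ] V →ₗ[ℝ] ℝ) (hω : ∀ x : V, ω x x = 0)
    (hnondeg : ∀ x : V, (∀ y : V, ω x y = 0) → x = 0)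
    (J₀ J : V →ₗ[ℝ] V)
    (hJ₀ : ∀ x : V, J₀ (J₀ x) = -x)
    (hJ : ∀ x : V, J (J x) = -x)
    (hcompat₀ : ∀ x y : V, ω (J₀ x) (J₀ y) = ω x y)
    (htame₀ : ∀ x : V, x ≠ 0 → 0 < ω x (J₀ x))
    (hcompat : ∀ x y : V, ω (J x) (J y) = ω x y)
    (htame : ∀ x : V, x ≠ 0 → 0 < ω x (J x))
    (S : V →ₗ[ℝ] V) (hS : ∀ x : V, S x = -(J₀ (J x))) :
    (∀ x y : V, ω (S x) (J₀ y) = ω x (J₀ (S y))) ∧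
    (∀ x : V, x ≠ 0 → 0 < ω (S x) (J₀ x)) ∧
    (∀ x y : V, ω (S x) (S y) = ω x y) ∧
    (∀ x : V, S (J₀ (S x)) = J₀ x) ∧
    (∀ x : V, J x = J₀ (S x)) := by
  have h5 : ∀ x : V, J x = J₀ (S x) := fun x => by rw [hS, map_neg, hJ₀, neg_neg]
  have h1 : ∀ x y : V, ω (S x) (J₀ y) = ω x (J₀ (S y)) := fun x y => by
    rw [← h5, hS, map_neg, LinearMap.neg_apply, hcompat₀, ← hcompat x (J y), hJ, map_neg]
  refine ⟨h1, fun x hx => ?_, fun x y => ?_, fun x => ?_, h5⟩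
  · rw [h1, ← h5]
    exact htame x hx
  · rw [← hcompat₀, ← h5, ← h5, hcompat]
  · rw [← h5, hS, hJ, map_neg, neg_neg]
end

section
/- Let n ≥ 1 and let a₁, …, aₙ be positive real numbers. Then ∑ⱼ aⱼ ≤ (∏ⱼ aⱼ) · (∑ⱼ aⱼ^{−1})^{n−1}. -/
theorem aux_succ (m : ℕ) (a : Fin (m + 1) → ℝ) (ha : ∀ j, 0 < a j) :
    ∑ j, a j ≤ (∏ j, a j) * (∑ j, (a j)⁻¹) ^ m := by
  induction m with
  | zero => simp
  | succ m ih =>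
    have h := ih (fun j => a j.castSucc) (fun j => ha _)
    rw [Fin.sum_univ_castSucc a, Fin.prod_univ_castSucc a,
      Fin.sum_univ_castSucc (fun j => (a j)⁻¹)]
    have hx := ha (Fin.last (m + 1))
    have hP : 0 < ∏ j : Fin (m + 1), a j.castSucc := Finset.prod_pos fun j _ => ha _
    have hS : a (Fin.castSucc 0) ≤ ∑ j : Fin (m + 1), a j.castSucc :=
      Finset.single_le_sum (f := fun j : Fin (m + 1) => a j.castSucc)
        (fun j _ => (ha _).le) (Finset.mem_univ 0)
    have hT : (a (Fin.castSucc 0))⁻¹ ≤ ∑ j : Fin (m + 1), (a j.castSucc)⁻¹ :=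
      Finset.single_le_sum (f := fun j : Fin (m + 1) => (a j.castSucc)⁻¹)
        (fun j _ => (inv_pos.2 (ha _)).le) (Finset.mem_univ 0)
    have h0 := ha (Fin.castSucc 0)
    have h0' := inv_pos.2 h0
    generalize (∏ j : Fin (m + 1), a j.castSucc) = P at *
    generalize (∑ j : Fin (m + 1), a j.castSucc) = S at *
    generalize (∑ j : Fin (m + 1), (a j.castSucc)⁻¹) = T at *
    generalize a (Fin.last (m + 1)) = x at *
    have hST : 1 ≤ S * T := by
      calc (1 : ℝ) = a (Fin.castSucc 0) * (a (Fin.castSucc 0))⁻¹ := (mul_inv_cancel₀ h0.ne').symm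
        _ ≤ S * T := mul_le_mul hS hT h0'.le (h0.le.trans hS)
    have hTpos : 0 < T := h0'.trans_le hT
    have hPT : 1 ≤ P * T ^ m * T := hST.trans (mul_le_mul_of_nonneg_right h hTpos.le)
    have hpow : T ^ m ≤ (T + x⁻¹) ^ m :=
      pow_le_pow_left₀ hTpos.le (by linarith [inv_pos.2 hx]) m
    calc S + x ≤ P * T ^ m + x * (P * T ^ m * T) := by nlinarith
      _ = P * T ^ m * (x * T + 1) := by ring
      _ ≤ P * (T + x⁻¹) ^ m * (x * T + 1) := by gcongr
      _ = P * x * (T + x⁻¹) ^ (m + 1) := by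
        rw [pow_succ]
        have : x * T + 1 = x * (T + x⁻¹) := by field_simp
        rw [this]; ring

/-- For positive reals `a₁, …, aₙ` (`n ≥ 1`),
`∑ aⱼ ≤ (∏ aⱼ) * (∑ aⱼ⁻¹)^(n-1)`. -/
theorem sum_le_prod_mul_sum_inv_pow
    (n : ℕ) (hn : 1 ≤ n) (a : Fin n → ℝ) (ha : ∀ j, 0 < a j) :
    ∑ j, a j ≤ (∏ j, a j) * (∑ j, (a j)⁻¹) ^ (n - 1) := by
  obtain ⟨m, rfl⟩ : ∃ m, n = m + 1 := ⟨n - 1, by omega⟩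
  exact aux_succ m a ha
end
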